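/- Let h(Q,n,k;·) and b(Q,n,k;·) denote the p.m.f.s on S^k of sampling k ≤ n balls without and with replacement, respectively, from an urn containing n balls of c different colours, where the n-type Q describes the composition of the balls in the urn. Then ‖h(Q,n,k;·) − b(Q,n,k;·)‖_TV ≤ 2ck/n. -/

import Mathlib

open MeasureTheory
open scoped ENNReal

/-- The total variation distance `‖μ − ν‖_TV := 2 sup_A |μ(A) − ν(A)|`, the supremum
being over measurable sets `A`. -/
noncomputable def tvDist {α : Type*} [MeasurableSpace α] (μ ν : Measure α) : ℝ :=
  2 * ⨆ A : {A : Set α // MeasurableSet A}, |(μ A.1).toReal - (ν A.1).toReal|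

/-- The law `h(Q,n,k;·)` on `S^k` of the sequence of colours of `k` balls drawn uniformly at
random *without replacement* from an urn of `n` balls whose colours are given by
`col : Fin n → Fin c` (the `n`-type `Q` describing the urn is `Q(j) = #col⁻¹(j)/n`):
the uniform average of the colour sequences over all injective sequences of `k` balls. -/
noncomputable def drawWithoutReplacement (n c k : ℕ) (col : Fin n → Fin c) :
    Measure (Fin k → Fin c) :=
  (((Finset.univ.filter (fun f : Fin k → Fin n => Function.Injective f)).card : ℝ≥0∞))⁻¹ •
    ∑ f ∈ Finset.univ.filter (fun f : Fin k → Fin n => Function.Injective f),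
      Measure.dirac (col ∘ f)

/-- The single-draw colour distribution `Q` of an urn of `n` balls with colours
`col : Fin n → Fin c`, i.e. `Q(j) = #col⁻¹(j)/n`. -/
noncomputable def urnColourDist (n c : ℕ) (col : Fin n → Fin c) : Measure (Fin c) :=
  ((n : ℝ≥0∞))⁻¹ • ∑ i : Fin n, Measure.dirac (col i)

/-- The law `b(Q,n,k;·) = Q^k` on `S^k` of `k` i.i.d. draws (*with replacement*) from the urn. -/
noncomputable def drawWithReplacement (n c k : ℕ) (col : Fin n → Fin c) :
    Measure (Fin k → Fin c) :=
  Measure.pi fun _ : Fin k => urnColourDist n c col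

namespace UrnTV

/-- number of balls of colour `j` -/
noncomputable def cnt {m c : ℕ} (x : Fin m → Fin c) (j : Fin c) : ℝ :=
  ∑ i, if x i = j then (1 : ℝ) else 0

/-- number of injective draws with colour sequence `x` -/
noncomputable def N {n c : ℕ} (col : Fin n → Fin c) (k : ℕ) (x : Fin k → Fin c) : ℝ :=
  ∑ f : Fin k → Fin n, if Function.Injective f ∧ col ∘ f = x then (1 : ℝ) else 0

/-- pmf without replacement -/
noncomputable def P {n c : ℕ} (col : Fin n → Fin c) (k : ℕ) (x : Fin k → Fin c) : ℝ :=
  N col k x / (n.descFactorial k : ℝ)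

/-- pmf with replacement -/
noncomputable def Q {n c : ℕ} (col : Fin n → Fin c) (k : ℕ) (x : Fin k → Fin c) : ℝ :=
  ∏ i, cnt col (x i) / n

/-- remaining balls -/
noncomputable def rem {n c : ℕ} (col : Fin n → Fin c) {k : ℕ} (x : Fin k → Fin c)
    (j : Fin c) : ℝ := cnt col j - cnt x j

variable {n c : ℕ} (col : Fin n → Fin c)

lemma cnt_nonneg {m : ℕ} (x : Fin m → Fin c) (j : Fin c) : 0 ≤ cnt x j :=
  Finset.sum_nonneg fun i _ => by split_ifs <;> simp

lemma sum_cnt {m : ℕ} (x : Fin m → Fin c) : ∑ j, cnt x j = m := by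
  unfold cnt
  rw [Finset.sum_comm]
  simp

lemma sum_cons {α : Type*} [Fintype α] {k : ℕ} (G : (Fin (k + 1) → α) → ℝ) :
    ∑ y, G y = ∑ x : Fin k → α, ∑ j : α, G (Fin.cons j x) := by
  rw [← (Fin.consEquiv (fun _ : Fin (k + 1) => α)).sum_comp, Fintype.sum_prod_type_right]
  rfl

lemma cnt_cons {k : ℕ} (x : Fin k → Fin c) (i j : Fin c) :
    cnt (Fin.cons i x : Fin (k + 1) → Fin c) j = (if i = j then 1 else 0) + cnt x j := by
  unfold cnt
  rw [Fin.sum_univ_succ]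
  simp

lemma rem_cons {k : ℕ} (x : Fin k → Fin c) (i j : Fin c) :
    rem col (Fin.cons i x : Fin (k + 1) → Fin c) j = rem col x j - (if i = j then 1 else 0) := by
  unfold rem
  rw [cnt_cons]; ring

lemma sum_rem {k : ℕ} (x : Fin k → Fin c) : ∑ j, rem col x j = (n : ℝ) - k := by
  unfold rem
  rw [Finset.sum_sub_distrib, sum_cnt, sum_cnt]

lemma N_nonneg (k : ℕ) (x : Fin k → Fin c) : 0 ≤ N col k x :=
  Finset.sum_nonneg fun i _ => by split_ifs <;> simp

lemma count_ext {k : ℕ} (f : Fin k → Fin n) (hf : Function.Injective f) (j : Fin c) :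
    (∑ i : Fin n, if (i ∉ Set.range f) ∧ col i = j then (1 : ℝ) else 0) =
      rem col (col ∘ f) j := by
  classical
  unfold rem cnt
  have h2 : (∑ a : Fin k, if (col ∘ f) a = j then (1 : ℝ) else 0) =
      ∑ i : Fin n, if i ∈ Set.range f ∧ col i = j then (1 : ℝ) else 0 := by
    have : (∑ a : Fin k, if (col ∘ f) a = j then (1 : ℝ) else 0) =
      ∑ i ∈ Finset.univ.map ⟨f, hf⟩, if col i = j then (1 : ℝ) else 0 := by
      rw [Finset.sum_map]; rfl
    rw [this, ← Finset.sum_filter, ← Finset.sum_filter, ]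
    apply Finset.sum_congr _ (fun _ _ => rfl)
    ext i
    simp
  rw [h2, ← Finset.sum_sub_distrib]
  apply Finset.sum_congr rfl
  intro i _
  by_cases h1 : i ∈ Set.range f <;> by_cases h3 : col i = j <;> simp [h1, h3]

lemma N_cons (k : ℕ) (x : Fin k → Fin c) (j : Fin c) :
    N col (k + 1) (Fin.cons j x) = N col k x * rem col x j := by
  classical
  unfold N
  rw [sum_cons, Finset.sum_mul]
  apply Finset.sum_congr rfl
  intro f _
  by_cases h : Function.Injective f ∧ col ∘ f = x
  · rw [if_pos h, one_mul]
    obtain ⟨hf, rfl⟩ := h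
    rw [← count_ext col f hf j]
    apply Finset.sum_congr rfl
    intro i _
    congr 1
    rw [Fin.cons_injective_iff, Fin.comp_cons, Fin.cons_inj]
    simp [hf]
  · rw [if_neg h, zero_mul]
    apply Finset.sum_eq_zero
    intro i _
    rw [if_neg]
    rw [Fin.cons_injective_iff, Fin.comp_cons, Fin.cons_inj]
    tauto

lemma P_nonneg (k : ℕ) (x : Fin k → Fin c) : 0 ≤ P col k x :=
  div_nonneg (N_nonneg col k x) (by positivity)

lemma Q_nonneg (k : ℕ) (x : Fin k → Fin c) : 0 ≤ Q col k x :=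
  Finset.prod_nonneg fun _ _ => div_nonneg (cnt_nonneg _ _) (by positivity)

lemma P_cons (k : ℕ) (hk : k < n) (x : Fin k → Fin c) (j : Fin c) :
    P col (k + 1) (Fin.cons j x) = P col k x * (rem col x j / ((n : ℝ) - k)) := by
  unfold P
  rw [N_cons, Nat.descFactorial_succ]
  push_cast [Nat.cast_sub hk.le]
  rw [mul_comm ((n : ℝ) - k), mul_div_mul_comm]

lemma Q_cons (k : ℕ) (x : Fin k → Fin c) (j : Fin c) :
    Q col (k + 1) (Fin.cons j x) = Q col k x * (cnt col j / n) := by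
  unfold Q
  rw [Fin.prod_univ_succ]
  simp [mul_comm]

lemma P_zero (x : Fin 0 → Fin c) : P col 0 x = 1 := by
  unfold P N
  simp [Function.injective_of_subsingleton, Subsingleton.elim _ x]

lemma Q_zero (x : Fin 0 → Fin c) : Q col 0 x = 1 := by
  simp [Q]

/-- one step of the expectation -/
lemma E_step (k : ℕ) (hk : k < n) (F : (Fin (k + 1) → Fin c) → ℝ) :
    ∑ y, P col (k + 1) y * F y =
      ∑ x, P col k x * ∑ j, rem col x j / ((n : ℝ) - k) * F (Fin.cons j x) := by
  rw [sum_cons]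
  simp_rw [P_cons col k hk, Finset.mul_sum, mul_assoc]

lemma sum_P (k : ℕ) (hk : k ≤ n) : ∑ x, P col k x = 1 := by
  induction k with
  | zero => simp [P_zero]
  | succ k ih =>
    have h := E_step col k hk (fun _ => 1)
    have hk' : (k : ℝ) < n := by exact_mod_cast hk
    simp only [mul_one, ← Finset.sum_div, sum_rem] at h
    rw [div_self (by linarith)] at h
    rw [h]
    simpa using ih (by omega)

lemma sum_Q (k : ℕ) (hk : k ≤ n) : ∑ x, Q col k x = 1 := by
  induction k with
  | zero => simp [Q_zero]
  | succ k ih =>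
    rw [sum_cons]
    have hn : (n : ℝ) ≠ 0 := by
      have : n ≠ 0 := by omega
      exact_mod_cast this
    simp_rw [Q_cons, ← Finset.mul_sum, ← Finset.sum_div, sum_cnt, div_self hn, mul_one]
    exact ih (by omega)

lemma M1 (k : ℕ) (hk : k ≤ n) (j : Fin c) :
    (∑ x, P col k x * rem col x j) * n = cnt col j * ((n : ℝ) - k) := by
  induction k with
  | zero => simp [P_zero, rem, cnt]
  | succ k ih =>
    have hk' : (k : ℝ) < n := by exact_mod_cast hk
    have hd : (n : ℝ) - k ≠ 0 := by linarith
    have key : ∀ x : Fin k → Fin c, ∑ i, rem col x i / ((n : ℝ) - k) *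
        rem col (Fin.cons i x : Fin (k + 1) → Fin c) j =
        rem col x j * (1 - 1 / ((n : ℝ) - k)) := by
      intro x
      simp_rw [rem_cons, mul_sub, Finset.sum_sub_distrib, ← Finset.sum_mul, ← Finset.sum_div,
        sum_rem]
      rw [div_self hd]
      simp
      ring
    rw [E_step col k hk]
    simp_rw [key, ← mul_assoc, ← Finset.sum_mul]
    rw [mul_right_comm, ih (by omega)]
    push_cast
    field_simp
    ring

lemma M2 (k : ℕ) (hk : k ≤ n) (j : Fin c) :
    (∑ x, P col k x * (rem col x j * (rem col x j - 1))) * (n * (n - 1)) =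
      cnt col j * (cnt col j - 1) * (((n : ℝ) - k) * (n - k - 1)) := by
  induction k with
  | zero => simp [P_zero, rem, cnt]
  | succ k ih =>
    have hk' : (k : ℝ) < n := by exact_mod_cast hk
    have hd : (n : ℝ) - k ≠ 0 := by linarith
    have key : ∀ x : Fin k → Fin c, ∑ i, rem col x i / ((n : ℝ) - k) *
        (rem col (Fin.cons i x : Fin (k + 1) → Fin c) j *
          (rem col (Fin.cons i x : Fin (k + 1) → Fin c) j - 1)) =
        (rem col x j * (rem col x j - 1)) * (1 - 2 / ((n : ℝ) - k)) := by
      intro x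
      have e : ∀ i, rem col x i / ((n : ℝ) - k) *
        (rem col (Fin.cons i x : Fin (k + 1) → Fin c) j *
          (rem col (Fin.cons i x : Fin (k + 1) → Fin c) j - 1)) =
          rem col x i / ((n : ℝ) - k) * (rem col x j * (rem col x j - 1)) -
          (if i = j then rem col x i / ((n : ℝ) - k) * (2 * (rem col x j - 1)) else 0) := by
        intro i
        rw [rem_cons]
        split_ifs <;> ring
      simp_rw [e, Finset.sum_sub_distrib, ← Finset.sum_mul, ← Finset.sum_div, sum_rem]
      rw [div_self hd]
      simp
      ring
    rw [E_step col k hk]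
    simp_rw [key, ← mul_assoc, ← Finset.sum_mul]
    simp_rw [← mul_assoc] at ih
    have := ih (by omega)
    rw [mul_right_comm _ (1 - 2 / ((n : ℝ) - k)) _, mul_right_comm _ (1 - 2 / ((n : ℝ) - k)) _, this]
    push_cast
    field_simp
    ring

/-- relative entropy -/
noncomputable def D (k : ℕ) : ℝ := ∑ x, P col k x * Real.log (P col k x / Q col k x)

lemma rem_nonneg (k : ℕ) (x : Fin k → Fin c) (j : Fin c) (h : P col k x ≠ 0) :
    0 ≤ rem col x j := by
  have h1 : 0 < N col k x := by
    refine lt_of_le_of_ne (N_nonneg _ _ _) fun h0 => h ?_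
    rw [P, ← h0, zero_div]
  have h2 := N_nonneg col (k + 1) (Fin.cons j x)
  rw [N_cons] at h2
  exact nonneg_of_mul_nonneg_right h2 h1

lemma Q_pos (k : ℕ) (hk : k ≤ n) (x : Fin k → Fin c) (h : P col k x ≠ 0) : 0 < Q col k x := by
  induction k with
  | zero => simp [Q_zero]
  | succ k ih =>
    obtain ⟨j, x, rfl⟩ : ∃ j x', x = Fin.cons j x' := ⟨x 0, Fin.tail x, by simp⟩
    rw [P_cons col k hk] at h
    have h1 := left_ne_zero_of_mul h
    have h2 := right_ne_zero_of_mul h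
    rw [Q_cons]
    refine mul_pos (ih (by omega) x h1) (div_pos ?_ (by exact_mod_cast (by omega)))
    have h3 := rem_nonneg col k x j h1
    have h4 : rem col x j ≠ 0 := fun h0 => h2 (by simp [h0])
    have h5 := cnt_nonneg x j
    have : 0 < rem col x j := lt_of_le_of_ne h3 (Ne.symm h4)
    unfold rem at this
    linarith

lemma point (k : ℕ) (hk : k < n) (x : Fin k → Fin c) (j : Fin c) :
    P col (k + 1) (Fin.cons j x) *
      Real.log (P col (k + 1) (Fin.cons j x) / Q col (k + 1) (Fin.cons j x)) ≤
    P col k x * Real.log (P col k x / Q col k x) * (rem col x j / ((n : ℝ) - k)) +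
    P col k x * ((rem col x j / ((n : ℝ) - k)) ^ 2 / (cnt col j / n)
      - rem col x j / ((n : ℝ) - k)) := by
  have hk' : (k : ℝ) < n := by exact_mod_cast hk
  have hd : 0 < (n : ℝ) - k := by linarith
  by_cases h : P col (k + 1) (Fin.cons j x) = 0
  · rw [h]
    rw [P_cons col k hk] at h
    rcases mul_eq_zero.1 h with h | h <;> simp [h]
  · have hq := Q_pos col (k + 1) hk _ h
    rw [P_cons col k hk] at h ⊢
    have h1 := left_ne_zero_of_mul h
    have h2 := right_ne_zero_of_mul h
    have hq1 := Q_pos col k hk.le _ h1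
    have hp1 := lt_of_le_of_ne (P_nonneg col k x) h1.symm
    have h3 := rem_nonneg col k x j h1
    rw [Q_cons] at hq ⊢
    have hs := pos_of_mul_pos_right hq hq1.le
    set r := rem col x j / ((n : ℝ) - k)
    set s := cnt col j / n
    have hr : 0 < r := lt_of_le_of_ne (div_nonneg h3 hd.le) h2.symm
    rw [mul_div_mul_comm, Real.log_mul (by positivity) (by positivity)]
    have hl : Real.log (r / s) ≤ r / s - 1 := Real.log_le_sub_one_of_pos (by positivity)
    have : P col k x * r * Real.log (r / s) ≤ P col k x * r * (r / s - 1) := by gcongr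
    calc _ = P col k x * Real.log (P col k x / Q col k x) * r +
          P col k x * r * Real.log (r / s) := by ring
      _ ≤ _ := by
        refine add_le_add le_rfl (this.trans (le_of_eq ?_))
        ring

lemma var_bound (k : ℕ) (hk : k < n) (hn : 2 ≤ n) (j : Fin c) :
    ∑ x, P col k x * ((rem col x j / ((n : ℝ) - k)) ^ 2 / (cnt col j / n)) ≤
      1 / ((n : ℝ) - k) * (1 + (cnt col j - 1) * ((n : ℝ) - k - 1) / (n - 1)) := by
  have hk' : (k : ℝ) < n := by exact_mod_cast hk
  have hd : 0 < (n : ℝ) - k := by linarith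
  have hn' : (2 : ℝ) ≤ n := by exact_mod_cast hn
  have hn1 : 0 < (n : ℝ) - 1 := by linarith
  have hn0 : 0 < (n : ℝ) := by linarith
  by_cases ha : cnt col j = 0
  · simp only [ha, zero_div, div_zero, mul_zero, Finset.sum_const_zero]
    have : 1 + (0 - 1) * ((n : ℝ) - k - 1) / (n - 1) = k / (n - 1) := by
      field_simp; ring
    rw [this]; positivity
  · have h1 := M1 col k hk.le j
    have h2 := M2 col k hk.le j
    have e : ∑ x, P col k x * ((rem col x j / ((n : ℝ) - k)) ^ 2 / (cnt col j / n)) =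
      ((∑ x, P col k x * (rem col x j * (rem col x j - 1))) + ∑ x, P col k x * rem col x j)
        * (n / (((n : ℝ) - k) ^ 2 * cnt col j)) := by
      rw [← Finset.sum_add_distrib, Finset.sum_mul]
      apply Finset.sum_congr rfl
      intro x _
      field_simp
      ring
    rw [e, eq_div_of_mul_eq hn0.ne' h1, eq_div_of_mul_eq (mul_pos hn0 hn1).ne' h2]
    apply le_of_eq
    field_simp
    ring

lemma D_step (k : ℕ) (hk : k < n) (hn : 2 ≤ n) :
    D col (k + 1) ≤ D col k + ((c : ℝ) - 1) * k / (((n : ℝ) - k) * (n - 1)) := by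
  have hk' : (k : ℝ) < n := by exact_mod_cast hk
  have hd : 0 < (n : ℝ) - k := by linarith
  have hn' : (2 : ℝ) ≤ n := by exact_mod_cast hn
  have hn1 : 0 < (n : ℝ) - 1 := by linarith
  unfold D
  rw [sum_cons]
  calc _ ≤ ∑ x, ∑ j, (P col k x * Real.log (P col k x / Q col k x) *
      (rem col x j / ((n : ℝ) - k)) +
    P col k x * ((rem col x j / ((n : ℝ) - k)) ^ 2 / (cnt col j / n)
      - rem col x j / ((n : ℝ) - k))) :=
        Finset.sum_le_sum fun x _ => Finset.sum_le_sum fun j _ => point col k hk x j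
    _ = ∑ x, P col k x * Real.log (P col k x / Q col k x) +
        ((∑ j, ∑ x, P col k x * ((rem col x j / ((n : ℝ) - k)) ^ 2 / (cnt col j / n))) - 1) := by
      rw [Finset.sum_comm (s := (Finset.univ : Finset (Fin c)))]
      rw [← sum_P col k hk.le, ← Finset.sum_sub_distrib, ← Finset.sum_add_distrib]
      apply Finset.sum_congr rfl
      intro x _
      rw [Finset.sum_add_distrib, ← Finset.mul_sum, ← Finset.mul_sum, Finset.sum_sub_distrib,
        ← Finset.sum_div, sum_rem, div_self hd.ne', ← Finset.mul_sum]
      ring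
    _ ≤ ∑ x, P col k x * Real.log (P col k x / Q col k x) +
        ((∑ j, 1 / ((n : ℝ) - k) * (1 + (cnt col j - 1) * ((n : ℝ) - k - 1) / (n - 1))) - 1) := by
      gcongr with j _
      exact var_bound col k hk hn j
    _ = _ := by
      rw [← Finset.mul_sum, Finset.sum_add_distrib, ← Finset.sum_div, ← Finset.sum_mul,
        Finset.sum_sub_distrib, sum_cnt]
      simp
      field_simp
      ring

lemma D_bound (k : ℕ) (hk : 2 * k ≤ n) :
    D col k ≤ ((c : ℝ) - 1) * (k * (k - 1)) / (n : ℝ) ^ 2 := by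
  induction k with
  | zero => simp [D, P_zero, Q_zero]
  | succ k ih =>
    have hc : 1 ≤ c := by
      have := (col ⟨0, by omega⟩).2
      omega
    have hc' : (0 : ℝ) ≤ (c : ℝ) - 1 := by
      have : (1 : ℝ) ≤ c := by exact_mod_cast hc
      linarith
    have hn' : (2 : ℝ) ≤ n := by exact_mod_cast (by omega : 2 ≤ n)
    have hk' : 2 * ((k : ℝ) + 1) ≤ n := by exact_mod_cast hk
    have hk0 : (0 : ℝ) ≤ k := by positivity
    have hd : 0 < (n : ℝ) - k := by linarith
    have hn1 : 0 < (n : ℝ) - 1 := by linarith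
    have h1 := D_step col k (by omega) (by omega)
    have h2 := ih (by omega)
    have h3 : ((c : ℝ) - 1) * k / (((n : ℝ) - k) * (n - 1)) ≤
        ((c : ℝ) - 1) * k / ((n : ℝ) ^ 2 / 2) := by
      apply div_le_div_of_nonneg_left (by positivity) (by positivity)
      nlinarith
    refine h1.trans ((add_le_add h2 h3).trans (le_of_eq ?_))
    push_cast
    field_simp
    ring

lemma hell {p q : ℝ} (hp : 0 ≤ p) (hq : 0 ≤ q) (h : p ≠ 0 → 0 < q) :
    (√p - √q) ^ 2 ≤ p * Real.log (p / q) - p + q := by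
  by_cases h0 : p = 0
  · simp [h0, Real.sq_sqrt hq]
  · have hp' : 0 < p := lt_of_le_of_ne hp (Ne.symm h0)
    have hq' := h h0
    have ha := Real.sqrt_pos.2 hp'
    have hb := Real.sqrt_pos.2 hq'
    have e1 := Real.sq_sqrt hp
    have e2 := Real.sq_sqrt hq
    set a := √p
    set b := √q
    rw [← e1, ← e2]
    have hl : Real.log (b / a) ≤ b / a - 1 := Real.log_le_sub_one_of_pos (by positivity)
    have e3 : Real.log (a ^ 2 / b ^ 2) = - 2 * Real.log (b / a) := by
      rw [← div_pow, Real.log_pow, ← inv_div, Real.log_inv]; push_cast; ring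
    rw [e3]
    have : a ^ 2 * Real.log (b / a) ≤ a ^ 2 * (b / a - 1) := by gcongr
    have e4 : a ^ 2 * (b / a - 1) = a * b - a ^ 2 := by field_simp
    nlinarith

lemma l1_sq (k : ℕ) (hk : k ≤ n) : (∑ x, |P col k x - Q col k x|) ^ 2 ≤ 4 * D col k := by
  have e : ∀ x, |P col k x - Q col k x| =
      |√(P col k x) - √(Q col k x)| * (√(P col k x) + √(Q col k x)) := by
    intro x
    nth_rewrite 1 [← Real.sq_sqrt (P_nonneg col k x), ← Real.sq_sqrt (Q_nonneg col k x)]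
    rw [sq_sub_sq, abs_mul, mul_comm, abs_of_nonneg (a := _ + _) (by positivity)]
  simp_rw [e]
  refine (Finset.sum_mul_sq_le_sq_mul_sq _ _ _).trans ?_
  have h1 : ∑ x, |√(P col k x) - √(Q col k x)| ^ 2 ≤ D col k := by
    calc _ ≤ ∑ x, (P col k x * Real.log (P col k x / Q col k x) - P col k x + Q col k x) := by
          refine Finset.sum_le_sum fun x _ => ?_
          rw [sq_abs]
          exact hell (P_nonneg col k x) (Q_nonneg col k x) (Q_pos col k hk x)
      _ = D col k := by
        rw [Finset.sum_add_distrib, Finset.sum_sub_distrib, sum_P col k hk, sum_Q col k hk, D]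
        ring
  have h2 : ∑ x, (√(P col k x) + √(Q col k x)) ^ 2 ≤ 4 := by
    calc _ ≤ ∑ x, (2 * P col k x + 2 * Q col k x) := by
          refine Finset.sum_le_sum fun x _ => ?_
          nlinarith [Real.sq_sqrt (P_nonneg col k x), Real.sq_sqrt (Q_nonneg col k x),
            sq_nonneg (√(P col k x) - √(Q col k x))]
      _ = 4 := by
        rw [Finset.sum_add_distrib, ← Finset.mul_sum, ← Finset.mul_sum, sum_P col k hk,
          sum_Q col k hk]
        norm_num
  have h0 : 0 ≤ ∑ x, |√(P col k x) - √(Q col k x)| ^ 2 :=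
    Finset.sum_nonneg fun _ _ => by positivity
  have h4 : 0 ≤ ∑ x, (√(P col k x) + √(Q col k x)) ^ 2 :=
    Finset.sum_nonneg fun _ _ => by positivity
  nlinarith

lemma core (k : ℕ) (hk : k ≤ n) (A : Finset (Fin k → Fin c)) :
    |∑ x ∈ A, P col k x - ∑ x ∈ A, Q col k x| ≤ (c : ℝ) * k / n := by
  by_cases h2 : 2 * k ≤ n
  · have h1 : |∑ x ∈ A, P col k x - ∑ x ∈ A, Q col k x| ≤ ∑ x, |P col k x - Q col k x| := by
      rw [← Finset.sum_sub_distrib]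
      exact (Finset.abs_sum_le_sum_abs _ _).trans
        (Finset.sum_le_sum_of_subset_of_nonneg (Finset.subset_univ _) fun _ _ _ => abs_nonneg _)
    refine h1.trans (abs_le_of_sq_le_sq' ?_ (by positivity)).2
    refine (l1_sq col k hk).trans ?_
    have h3 := D_bound col k h2
    refine (mul_le_mul_of_nonneg_left h3 (by norm_num)).trans ?_
    rw [div_pow, ← mul_div_assoc]
    gcongr
    have : (0 : ℝ) ≤ k * (k - 1) := by
      rcases Nat.eq_zero_or_pos k with h | h
      · simp [h]
      · have : (1 : ℝ) ≤ k := by exact_mod_cast h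
        nlinarith
    have hk0 : (0 : ℝ) ≤ k := by positivity
    nlinarith [mul_nonneg (sq_nonneg ((c : ℝ) - 2)) this, mul_nonneg (sq_nonneg (c : ℝ)) hk0]
  · have hn : 0 < n := by omega
    have hc0 := (col ⟨0, hn⟩).2
    have sP : ∑ x ∈ A, P col k x ≤ 1 := by
      rw [← sum_P col k hk]
      exact Finset.sum_le_sum_of_subset_of_nonneg (Finset.subset_univ _)
        fun _ _ _ => P_nonneg _ _ _
    have sQ : ∑ x ∈ A, Q col k x ≤ 1 := by
      rw [← sum_Q col k hk]
      exact Finset.sum_le_sum_of_subset_of_nonneg (Finset.subset_univ _)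
        fun _ _ _ => Q_nonneg _ _ _
    have sP0 : 0 ≤ ∑ x ∈ A, P col k x := Finset.sum_nonneg fun _ _ => P_nonneg _ _ _
    have sQ0 : 0 ≤ ∑ x ∈ A, Q col k x := Finset.sum_nonneg fun _ _ => Q_nonneg _ _ _
    by_cases hc : 2 ≤ c
    · have : (1 : ℝ) ≤ (c : ℝ) * k / n := by
        rw [one_le_div (by exact_mod_cast hn)]
        have : n ≤ c * k := by nlinarith
        exact_mod_cast this
      refine le_trans ?_ this
      rw [abs_le]; constructor <;> linarith
    · obtain rfl : c = 1 := by omega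
      rcases A.eq_empty_or_nonempty with h | ⟨a, ha⟩
      · simp [h]; positivity
      · have : A = Finset.univ := by
          ext x; rw [Subsingleton.elim x a]; exact ⟨fun _ => Finset.mem_univ _, fun _ => ha⟩
        rw [this, sum_P col k hk, sum_Q col k hk]
        simp; positivity

lemma urn_singleton (j : Fin c) :
    (urnColourDist n c col {j}).toReal = cnt col j / n := by
  unfold urnColourDist cnt
  simp only [Measure.smul_apply, Measure.finsetSum_apply, smul_eq_mul, ENNReal.toReal_mul,
    ENNReal.toReal_inv, ENNReal.toReal_natCast]
  rw [ENNReal.toReal_sum (fun i _ => measure_ne_top _ _), div_eq_inv_mul]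
  congr 1
  apply Finset.sum_congr rfl
  intro i _
  rw [Measure.dirac_apply]
  by_cases h : col i = j <;> simp [h]

instance : IsFiniteMeasure (urnColourDist n c col) := by
  unfold urnColourDist
  rcases Nat.eq_zero_or_pos n with h | h
  · subst h
    simp
    infer_instance
  · refine Measure.smul_finite _ ?_
    simp; omega

lemma with_singleton (k : ℕ) (x : Fin k → Fin c) :
    (drawWithReplacement n c k col {x}).toReal = Q col k x := by
  unfold drawWithReplacement Q
  rw [Measure.pi_singleton, ENNReal.toReal_prod]
  simp_rw [urn_singleton]

lemma card_inj (k : ℕ) :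
    (Finset.univ.filter (fun f : Fin k → Fin n => Function.Injective f)).card =
      n.descFactorial k := by
  rw [← Fintype.card_subtype, Fintype.card_congr (Equiv.subtypeInjectiveEquivEmbedding _ _),
    Fintype.card_embedding_eq]
  simp

lemma without_singleton (k : ℕ) (x : Fin k → Fin c) :
    (drawWithoutReplacement n c k col {x}).toReal = P col k x := by
  unfold drawWithoutReplacement P N
  rw [card_inj]
  simp only [Measure.smul_apply, Measure.finsetSum_apply, smul_eq_mul, ENNReal.toReal_mul,
    ENNReal.toReal_inv, ENNReal.toReal_natCast]
  rw [ENNReal.toReal_sum (fun i _ => measure_ne_top _ _), div_eq_inv_mul]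
  congr 1
  rw [Finset.sum_filter]
  apply Finset.sum_congr rfl
  intro f _
  rw [Measure.dirac_apply]
  by_cases h : col ∘ f = x <;> by_cases h' : Function.Injective f <;> simp [h, h']

lemma toReal_eq {α : Type*} [MeasurableSpace α] [MeasurableSingletonClass α]
    (μ : Measure α) [IsFiniteMeasure μ] (A : Finset α) :
    (μ (A : Set α)).toReal = ∑ x ∈ A, (μ {x}).toReal := by
  rw [← ENNReal.toReal_sum (fun i _ => measure_ne_top _ _), sum_measure_singleton]

end UrnTV

open UrnTV in
/-- **Sampling with vs. without replacement in total variation** (Diaconis–Freedman).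
If `k ≤ n` balls are drawn from an urn of `n` balls of `c` colours (colour assignment
`col : Fin n → Fin c`, corresponding to the `n`-type `Q(j) = #col⁻¹(j)/n`), then
`‖h(Q,n,k;·) − b(Q,n,k;·)‖_TV ≤ 2ck/n`. -/
theorem sampling_TV_le {n c k : ℕ} (hk : k ≤ n) (col : Fin n → Fin c) :
    tvDist (drawWithoutReplacement n c k col) (drawWithReplacement n c k col) ≤
      (2 * c * k : ℝ) / n := by
  classical
  have hfin1 : IsFiniteMeasure (drawWithoutReplacement n c k col) := by
    unfold drawWithoutReplacement
    refine Measure.smul_finite _ ?_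
    rw [card_inj]
    have := Nat.descFactorial_pos.2 hk
    simp; omega
  have hfin2 : IsFiniteMeasure (drawWithReplacement n c k col) := by
    unfold drawWithReplacement
    infer_instance
  unfold tvDist
  have : Nonempty {A : Set (Fin k → Fin c) // MeasurableSet A} := ⟨⟨∅, MeasurableSet.empty⟩⟩
  have h : (⨆ A : {A : Set (Fin k → Fin c) // MeasurableSet A},
      |(drawWithoutReplacement n c k col A.1).toReal -
        (drawWithReplacement n c k col A.1).toReal|) ≤ (c : ℝ) * k / n := by
    refine ciSup_le ?_
    rintro ⟨A, -⟩
    have hA : A = (A.toFinset : Set _) := by simp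
    simp only
    rw [hA, toReal_eq, toReal_eq]
    simp_rw [with_singleton, without_singleton]
    exact core col k hk _
  calc _ ≤ 2 * ((c : ℝ) * k / n) := by linarith
    _ = _ := by ring
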